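/- The ⊑-minimal elements of P^I_{A,b} = {z ∈ ℤ^n_+ : Az = b} (equivalently, its ≤-minimal elements in the componentwise order on ℤ^n_+) correspond exactly to the elements (z,u) with u = 1 of the Hilbert basis of the monoid {(z,u) ∈ ℤ^{n+1}_+ : Az − bu = 0}; in particular, if (z,1) is an irreducible (non-trivially-decomposable) element of this monoid, then z is a ≤-minimal element of P^I_{A,b}, and conversely. -/

import Mathlib

def sqle {n : ℕ} (u v : Fin n → ℤ) : Prop :=
  ∀ j, 0 ≤ u j * v j ∧ |u j| ≤ |v j|

def QF {d n : ℕ} (A : Matrix (Fin d) (Fin n) ℤ) (b : Fin d → ℤ) : Set (Fin n → ℤ) :=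
  {z | A.mulVec z = b}

def PF {d n : ℕ} (A : Matrix (Fin d) (Fin n) ℤ) (b : Fin d → ℤ) : Set (Fin n → ℤ) :=
  {z | A.mulVec z = b ∧ 0 ≤ z}

def oplus {n : ℕ} (S T U : Set (Fin n → ℤ)) : Prop :=
  ∀ z ∈ S, ∃ z₁ ∈ T, ∃ z₂ ∈ U, sqle z₁ z ∧ sqle z₂ z ∧ z = z₁ + z₂

/-!
Both minimality of `z` and irreducibility of `(z, 1)` say that no nonzero `w` in the nonnegative
kernel satisfies `w ≤ z`. Two comparable points of a fiber differ by such a `w`; and since the last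
coordinates of a decomposition of `(z, 1)` are nonnegative integers with sum `1`, one of the
summands is `(w, 0)` for such a `w`.
-/

theorem minimal_mem_iff_of_mem {α : Type*} [PartialOrder α] {s : Set α} {a : α} (ha : a ∈ s) :
    Minimal (· ∈ s) a ↔ ∀ a' ∈ s, a' ≤ a → a' = a :=
  ⟨fun h _ ha' hle ↦ h.eq_of_le ha' hle, fun h ↦ ⟨ha, fun a' ha' hle ↦ (h a' ha' hle).ge⟩⟩

/-- The Hilbert basis of an additive monoid, as its set of irreducible elements. It is meant for
monoids without nonzero units, where irreducibility only has to exclude zero summands. -/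
def hilbertBasis {M : Type*} [AddMonoid M] (S : AddSubmonoid M) : Set M :=
  {x | x ≠ 0 ∧ IsAddIndecomposable id (S : Set M) x}

section NonnegFiber

variable {G H : Type*} [AddCommGroup G] [PartialOrder G] [AddGroup H]

/-- The nonnegative points of the fiber of `f` over `c`. For `f` given by an integer matrix `A` and
`c = b` this is `P^I_{A,b}`; for `c = 0` it is the nonnegative part of the kernel. -/
def nonnegFiber (f : G →+ H) (c : H) : Set G :=
  {z | f z = c ∧ 0 ≤ z}

variable [IsOrderedAddMonoid G] {f : G →+ H} {b c c' : H} {x y z : G}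

theorem sub_mem_nonnegFiber (hx : x ∈ nonnegFiber f c) (hy : y ∈ nonnegFiber f c') (hle : y ≤ x) :
    x - y ∈ nonnegFiber f (c - c') :=
  ⟨by rw [map_sub, hx.1, hy.1], sub_nonneg.mpr hle⟩

theorem minimal_mem_nonnegFiber_iff :
    Minimal (· ∈ nonnegFiber f b) z ↔
      z ∈ nonnegFiber f b ∧ ∀ w ∈ nonnegFiber f 0, w ≤ z → w = 0 := by
  refine ⟨fun h ↦ ⟨h.prop, fun w hw hle ↦ ?_⟩, fun ⟨hz, h⟩ ↦ ?_⟩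
  · have hsub : z - w ∈ nonnegFiber f b := by simpa using sub_mem_nonnegFiber h.prop hw hle
    exact sub_eq_self.mp (h.eq_of_le hsub (sub_le_self z hw.2))
  · refine (minimal_mem_iff_of_mem hz).mpr fun z' hz' hle ↦ ?_
    have hsub : z - z' ∈ nonnegFiber f 0 := by simpa using sub_mem_nonnegFiber hz hz' hle
    exact (sub_eq_zero.mp (h _ hsub (sub_le_self z hz'.2))).symm

variable (f b) in
/-- The monoid of all `(z, u) ≥ 0` with `f z = u • b`, whose slice at height `u = 1` is
`nonnegFiber f b`. -/
noncomputable def homogenization : AddSubmonoid (G × ℤ) :=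
  (f.comp (.fst G ℤ)).eqLocusM ((zmultiplesHom H b).comp (.snd G ℤ)) ⊓ .nonneg (G × ℤ)

theorem mk_mem_homogenization {u : ℤ} :
    (z, u) ∈ homogenization f b ↔ z ∈ nonnegFiber f (u • b) ∧ 0 ≤ u :=
  and_assoc.symm

theorem mk_zero_mem_homogenization :
    (z, 0) ∈ homogenization f b ↔ z ∈ nonnegFiber f 0 := by
  simp [mk_mem_homogenization]

theorem mk_one_mem_homogenization :
    (z, 1) ∈ homogenization f b ↔ z ∈ nonnegFiber f b := by
  simp [mk_mem_homogenization]

theorem mk_one_mem_hilbertBasis_homogenization_iff :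
    (z, 1) ∈ hilbertBasis (homogenization f b) ↔
      z ∈ nonnegFiber f b ∧ ∀ w ∈ nonnegFiber f 0, w ≤ z → w = 0 := by
  refine ⟨fun ⟨_, hmem, hirr⟩ ↦ ?_, fun ⟨hz, h⟩ ↦ ⟨by simp, mk_one_mem_homogenization.mpr hz, ?_⟩⟩
  · have hz : z ∈ nonnegFiber f b := mk_one_mem_homogenization.mp hmem
    refine ⟨hz, fun w hw hle ↦ ?_⟩
    have hsub : z - w ∈ nonnegFiber f b := by simpa using sub_mem_nonnegFiber hz hw hle
    have hsplit := hirr (w, 0) (mk_zero_mem_homogenization.mpr hw)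
      (z - w, 1) (mk_one_mem_homogenization.mpr hsub) (by simp)
    simpa using hsplit
  · rintro ⟨z₁, u₁⟩ h₁ ⟨z₂, u₂⟩ h₂ hadd
    obtain ⟨rfl, hu⟩ : z = z₁ + z₂ ∧ 1 = u₁ + u₂ := Prod.mk.inj hadd
    have hz₁ : 0 ≤ z₁ := h₁.2.1
    have hz₂ : 0 ≤ z₂ := h₂.2.1
    have hu₁ : 0 ≤ u₁ := h₁.2.2
    have hu₂ : 0 ≤ u₂ := h₂.2.2
    obtain rfl | rfl : u₁ = 0 ∨ u₂ = 0 := by lia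
    · have hker : z₁ ∈ nonnegFiber f 0 := mk_zero_mem_homogenization.mp h₁
      exact .inl (Prod.ext (h z₁ hker (le_add_of_nonneg_right hz₂)) rfl)
    · have hker : z₂ ∈ nonnegFiber f 0 := mk_zero_mem_homogenization.mp h₂
      exact .inr (Prod.ext (h z₂ hker (le_add_of_nonneg_left hz₁)) rfl)

theorem mk_one_mem_hilbertBasis_homogenization_iff_forall_add (hz : z ∈ nonnegFiber f b) :
    (z, 1) ∈ hilbertBasis (homogenization f b) ↔
      ∀ (z₁ z₂ : G) (u₁ u₂ : ℤ),
        0 ≤ z₁ → 0 ≤ u₁ → f z₁ = u₁ • b → 0 ≤ z₂ → 0 ≤ u₂ → f z₂ = u₂ • b →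
        z = z₁ + z₂ → 1 = u₁ + u₂ → (z₁ = 0 ∧ u₁ = 0) ∨ (z₂ = 0 ∧ u₂ = 0) := by
  constructor
  · rintro ⟨_, _, hirr⟩ z₁ z₂ u₁ u₂ hz₁ hu₁ hf₁ hz₂ hu₂ hf₂ hadd hu
    simpa using hirr (z₁, u₁) ⟨hf₁, hz₁, hu₁⟩ (z₂, u₂) ⟨hf₂, hz₂, hu₂⟩ (Prod.ext hadd hu)
  · refine fun h ↦ ⟨by simp, mk_one_mem_homogenization.mpr hz, ?_⟩
    rintro ⟨z₁, u₁⟩ ⟨hf₁, hz₁, hu₁⟩ ⟨z₂, u₂⟩ ⟨hf₂, hz₂, hu₂⟩ hadd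
    obtain ⟨hadd, hu⟩ := Prod.mk.inj hadd
    simpa using h z₁ z₂ u₁ u₂ hz₁ hu₁ hf₁ hz₂ hu₂ hf₂ hadd hu

theorem min_iff_hilbert_basis_elem_general :
    Minimal (· ∈ nonnegFiber f b) z ↔ (z, 1) ∈ hilbertBasis (homogenization f b) :=
  minimal_mem_nonnegFiber_iff.trans mk_one_mem_hilbertBasis_homogenization_iff.symm

end NonnegFiber

theorem min_iff_hilbert_basis_elem {d n : ℕ} (A : Matrix (Fin d) (Fin n) ℤ)
    (b : Fin d → ℤ) (z : Fin n → ℤ) (hz : z ∈ PF A b) :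
    (∀ z' ∈ PF A b, z' ≤ z → z' = z) ↔
      (∀ (z₁ z₂ : Fin n → ℤ) (u₁ u₂ : ℤ),
        0 ≤ z₁ → 0 ≤ u₁ → A.mulVec z₁ = u₁ • b →
        0 ≤ z₂ → 0 ≤ u₂ → A.mulVec z₂ = u₂ • b →
        z = z₁ + z₂ → (1 : ℤ) = u₁ + u₂ →
        (z₁ = 0 ∧ u₁ = 0) ∨ (z₂ = 0 ∧ u₂ = 0)) :=
  (minimal_mem_iff_of_mem hz).symm.trans <| min_iff_hilbert_basis_elem_general.trans <|
    mk_one_mem_hilbertBasis_homogenization_iff_forall_add (f := A.mulVecLin.toAddMonoidHom) hz
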